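/- For every ε ∈ (0,1/2) there is a constant C = C(ε) ≥ 1 such that the following holds. Let p ∈ (0,1/2], K ≥ 1, and let f : {0,1}^n → {0,1} be a monotone Boolean function with ε ≤ μ_p(f) ≤ 1 − ε and I[f] ≤ K/p. Then there is a set J ⊆ [n] with |J| ≤ C·K such that μ_p(f_{J→1}) ≥ μ_p(f) + e^{−C·K}. -/

import Mathlib

open Finset

namespace GlobalHC

variable {n : ℕ}

/-- Expectation with respect to the `p`-biased measure on `{0,1}^n`. -/
noncomputable def Ep (p : ℝ) (f : (Fin n → Bool) → ℝ) : ℝ :=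
  ∑ x : Fin n → Bool, (∏ i, if x i then p else 1 - p) * f x

/-- The `r`-norm with respect to the `p`-biased measure. -/
noncomputable def pnorm (p r : ℝ) (f : (Fin n → Bool) → ℝ) : ℝ :=
  (Ep p fun x => |f x| ^ r) ^ (1 / r)

/-- The `p`-biased character `χ_S`. -/
noncomputable def chi (p : ℝ) (S : Finset (Fin n)) (x : Fin n → Bool) : ℝ :=
  ∏ i ∈ S, ((if x i then (1 : ℝ) else 0) - p) / Real.sqrt (p * (1 - p))

/-- The `p`-biased Fourier coefficient `f̂(S)`. -/
noncomputable def coeff (p : ℝ) (f : (Fin n → Bool) → ℝ) (S : Finset (Fin n)) : ℝ :=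
  Ep p fun x => f x * chi p S x

/-- The derivative `D_S f = Σ_{T ⊇ S} f̂(T) χ_{T∖S}`. -/
noncomputable def derivS (p : ℝ) (S : Finset (Fin n)) (f : (Fin n → Bool) → ℝ) :
    (Fin n → Bool) → ℝ :=
  fun x => ∑ T ∈ Finset.univ.filter (fun T => S ⊆ T), coeff p f T * chi p (T \ S) x

/-- The generalised influence `I_S(f) = σ^{-2|S|} Σ_{T ⊇ S} f̂(T)²`. -/
noncomputable def genInf (p : ℝ) (S : Finset (Fin n)) (f : (Fin n → Bool) → ℝ) : ℝ :=
  (∑ T ∈ Finset.univ.filter (fun T => S ⊆ T), coeff p f T ^ 2) / (p * (1 - p)) ^ S.card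

/-- The noise operator `T_ρ f = Σ_S ρ^{|S|} f̂(S) χ_S`. -/
noncomputable def noise (p ρ : ℝ) (f : (Fin n → Bool) → ℝ) : (Fin n → Bool) → ℝ :=
  fun x => ∑ S : Finset (Fin n), ρ ^ S.card * coeff p f S * chi p S x

/-- The degree-`r` truncation `f^{≤ r}`. -/
noncomputable def trunc (p : ℝ) (r : ℕ) (f : (Fin n → Bool) → ℝ) : (Fin n → Bool) → ℝ :=
  fun x => ∑ S ∈ Finset.univ.filter (fun S : Finset (Fin n) => S.card ≤ r),
    coeff p f S * chi p S x

/-- The restriction `f_{J→1}` setting all coordinates in `J` to `1`. -/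
def restrict1 (J : Finset (Fin n)) (f : (Fin n → Bool) → ℝ) : (Fin n → Bool) → ℝ :=
  fun x => f (fun i => if i ∈ J then true else x i)

/-- `f` is `(r,δ)`-global (for the `p`-biased measure). -/
def IsGlobal (p r δ : ℝ) (f : (Fin n → Bool) → ℝ) : Prop :=
  ∀ J : Finset (Fin n), (J.card : ℝ) ≤ r → Ep p (restrict1 J f) ≤ Ep p f + δ

/-- The total influence `I[f] = Σ_i Pr_{μ_p}[f(x ⊕ e_i) ≠ f(x)]`. -/
noncomputable def totalInf (p : ℝ) (f : (Fin n → Bool) → ℝ) : ℝ :=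
  ∑ i : Fin n, Ep p fun x => if f (Function.update x i (!x i)) = f x then 0 else 1

/-- Noise stability `Stab_ρ(f) = Σ_S ρ^{|S|} f̂(S)²` (w.r.t. `μ_p`). -/
noncomputable def stab (p ρ : ℝ) (f : (Fin n → Bool) → ℝ) : ℝ :=
  ∑ S : Finset (Fin n), ρ ^ S.card * coeff p f S ^ 2

/-- `f` is monotone. -/
def Mono (f : (Fin n → Bool) → ℝ) : Prop :=
  ∀ x y : Fin n → Bool, (∀ i, x i ≤ y i) → f x ≤ f y


/-- The one-coordinate discrete derivative. -/
def dL (i : Fin n) (f : (Fin n → Bool) → ℝ) : (Fin n → Bool) → ℝ :=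
  fun x => f (Function.update x i true) - f (Function.update x i false)

/-- The restriction setting all coordinates in `J` to `0`. -/
def restrict0 (J : Finset (Fin n)) (f : (Fin n → Bool) → ℝ) : (Fin n → Bool) → ℝ :=
  fun x => f (fun i => if i ∈ J then false else x i)

theorem Ep_add (p : ℝ) (f g : (Fin n → Bool) → ℝ) :
    Ep p (fun x => f x + g x) = Ep p f + Ep p g := by
  simp only [Ep, mul_add, Finset.sum_add_distrib]

theorem Ep_sub (p : ℝ) (f g : (Fin n → Bool) → ℝ) :
    Ep p (fun x => f x - g x) = Ep p f - Ep p g := by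
  simp only [Ep, mul_sub, Finset.sum_sub_distrib]

theorem Ep_const_mul (p c : ℝ) (f : (Fin n → Bool) → ℝ) :
    Ep p (fun x => c * f x) = c * Ep p f := by
  simp only [Ep, Finset.mul_sum]
  exact Finset.sum_congr rfl fun x _ => by ring

theorem Ep_sum {α : Type*} (p : ℝ) (s : Finset α) (f : α → (Fin n → Bool) → ℝ) :
    Ep p (fun x => ∑ a ∈ s, f a x) = ∑ a ∈ s, Ep p (f a) := by
  simp only [Ep, Finset.mul_sum]
  exact Finset.sum_comm

theorem weight_nonneg {p : ℝ} (hp : 0 < p) (hp2 : p ≤ 1/2) (x : Fin n → Bool) :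
    0 ≤ ∏ i, (if x i then p else 1 - p) := by
  refine Finset.prod_nonneg fun i _ => ?_
  split_ifs <;> linarith

theorem Ep_mono {p : ℝ} (hp : 0 < p) (hp2 : p ≤ 1/2) {f g : (Fin n → Bool) → ℝ}
    (h : ∀ x, f x ≤ g x) : Ep p f ≤ Ep p g :=
  Finset.sum_le_sum fun x _ => mul_le_mul_of_nonneg_left (h x) (weight_nonneg hp hp2 x)

theorem Ep_nonneg {p : ℝ} (hp : 0 < p) (hp2 : p ≤ 1/2) {f : (Fin n → Bool) → ℝ}
    (h : ∀ x, 0 ≤ f x) : 0 ≤ Ep p f :=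
  Finset.sum_nonneg fun x _ => mul_nonneg (weight_nonneg hp hp2 x) (h x)

theorem Ep_cs {p : ℝ} (hp : 0 < p) (hp2 : p ≤ 1/2) (f g : (Fin n → Bool) → ℝ) :
    (Ep p fun x => f x * g x) ^ 2 ≤ (Ep p fun x => f x ^ 2) * (Ep p fun x => g x ^ 2) := by
  unfold Ep
  refine Finset.sum_sq_le_sum_mul_sum_of_sq_le_mul _ ?_ ?_ ?_
  · exact fun x _ => mul_nonneg (weight_nonneg hp hp2 x) (sq_nonneg _)
  · exact fun x _ => mul_nonneg (weight_nonneg hp hp2 x) (sq_nonneg _)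
  · intro x _
    apply le_of_eq
    ring

theorem Ep_coord (p : ℝ) (i : Fin n) (F : (Fin n → Bool) → ℝ) :
    Ep p F = Ep p (fun x => p * F (Function.update x i true)
      + (1 - p) * F (Function.update x i false)) := by
  have hinv : Function.Involutive (fun x : Fin n → Bool => Function.update x i (!x i)) := by
    intro x
    simp
  have key : ∀ G : (Fin n → Bool) → ℝ,
      2 * ∑ x, G x = ∑ x, (G x + G (Function.update x i (!x i))) := by
    intro G
    rw [Finset.sum_add_distrib, two_mul]
    congr 1
    exact (Equiv.sum_comp hinv.toPerm G).symm
  have hw : ∀ (x : Fin n → Bool) (b : Bool),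
      (∏ j, if (Function.update x i b) j then p else 1 - p) =
      (if b then p else 1 - p) * ∏ j ∈ Finset.univ.erase i, (if x j then p else 1 - p) := by
    intro x b
    rw [← Finset.mul_prod_erase _ _ (Finset.mem_univ i)]
    congr 1
    · simp
    · refine Finset.prod_congr rfl fun j hj => ?_
      rw [Function.update_of_ne (Finset.ne_of_mem_erase hj)]
  have hx : ∀ x : Fin n → Bool, ∀ b, x i = b → x = Function.update x i b := by
    rintro x b rfl
    simp
  suffices h : 2 * Ep p F = 2 * Ep p (fun x => p * F (Function.update x i true)
      + (1 - p) * F (Function.update x i false)) by linarith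
  unfold Ep
  rw [key, key]
  refine Finset.sum_congr rfl fun x _ => ?_
  cases hb : x i
  · have h1 := hw x false
    rw [← hx x false hb] at h1
    simp only [Bool.not_false, Function.update_idem, hw, h1]
    rw [← hx x false hb]
    simp
    ring
  · have h1 := hw x true
    rw [← hx x true hb] at h1
    simp only [Bool.not_true, Function.update_idem, hw, h1]
    rw [← hx x true hb]
    simp
    ring

/-! ### Characters -/

theorem sig_pos {p : ℝ} (hp : 0 < p) (hp2 : p ≤ 1/2) : 0 < Real.sqrt (p * (1 - p)) :=
  Real.sqrt_pos.mpr (mul_pos hp (by linarith))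

theorem sig_sq {p : ℝ} (hp : 0 < p) (hp2 : p ≤ 1/2) :
    Real.sqrt (p * (1 - p)) ^ 2 = p * (1 - p) :=
  Real.sq_sqrt (mul_nonneg hp.le (by linarith))

theorem chi_update {p : ℝ} {i : Fin n} {S : Finset (Fin n)} (hi : i ∉ S) (x : Fin n → Bool)
    (b : Bool) : chi p S (Function.update x i b) = chi p S x := by
  refine Finset.prod_congr rfl fun j hj => ?_
  have hne : j ≠ i := fun h => hi (h ▸ hj)
  rw [Function.update_of_ne hne]

theorem chi_insert {p : ℝ} {i : Fin n} {S : Finset (Fin n)} (hi : i ∉ S) (x : Fin n → Bool) :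
    chi p (insert i S) x =
      ((if x i then (1 : ℝ) else 0) - p) / Real.sqrt (p * (1 - p)) * chi p S x := by
  unfold chi
  rw [Finset.prod_insert hi]

theorem chi_kernel {p : ℝ} (hp : 0 < p) (hp2 : p ≤ 1/2) (x y : Fin n → Bool) :
    ∑ T : Finset (Fin n), chi p T x * chi p T y =
      if x = y then (∏ i, if x i then p else 1 - p)⁻¹ else 0 := by
  have hs := sig_pos hp hp2
  have hs2 := sig_sq hp hp2
  have h1 : (∑ T : Finset (Fin n), chi p T x * chi p T y) =
      ∏ i, (1 + ((if x i then (1 : ℝ) else 0) - p) / Real.sqrt (p * (1 - p)) *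
        (((if y i then (1 : ℝ) else 0) - p) / Real.sqrt (p * (1 - p)))) := by
    rw [Finset.prod_one_add, Finset.powerset_univ]
    refine Finset.sum_congr rfl fun T _ => ?_
    rw [chi, chi, Finset.prod_mul_distrib]
  rw [h1]
  have hp1 : (1 - p) ≠ 0 := by linarith
  have hp0 : p ≠ 0 := hp.ne'
  have e1 : ∀ a b : ℝ, a / Real.sqrt (p * (1 - p)) * (b / Real.sqrt (p * (1 - p))) =
      a * b / (p * (1 - p)) := by
    intro a b
    rw [div_mul_div_comm, ← sq, hs2]
  split_ifs with hxy
  · subst hxy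
    rw [← Finset.prod_inv_distrib]
    refine Finset.prod_congr rfl fun i _ => ?_
    rw [e1]
    cases x i
    · simp
      field_simp
      ring
    · simp
      field_simp
      ring
  · obtain ⟨i, hi⟩ := Function.ne_iff.mp hxy
    refine Finset.prod_eq_zero (Finset.mem_univ i) ?_
    rw [e1]
    revert hi
    cases x i <;> cases y i <;> intro hi <;> simp at hi ⊢ <;> field_simp <;> ring

theorem inversion {p : ℝ} (hp : 0 < p) (hp2 : p ≤ 1/2) (f : (Fin n → Bool) → ℝ)
    (x : Fin n → Bool) : f x = ∑ T : Finset (Fin n), coeff p f T * chi p T x := by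
  have hw : (∏ i, if x i then p else 1 - p) ≠ 0 := by
    refine Finset.prod_ne_zero_iff.mpr fun i _ => ?_
    split_ifs <;> linarith
  have : ∀ T : Finset (Fin n), coeff p f T * chi p T x =
      ∑ y : Fin n → Bool, (∏ i, if y i then p else 1 - p) * f y * (chi p T x * chi p T y) := by
    intro T
    simp only [coeff, Ep, Finset.sum_mul]
    exact Finset.sum_congr rfl fun y _ => by ring
  simp only [this]
  rw [Finset.sum_comm]
  simp only [← Finset.mul_sum, chi_kernel hp hp2]
  simp
  field_simp

theorem parseval {p : ℝ} (hp : 0 < p) (hp2 : p ≤ 1/2) (f : (Fin n → Bool) → ℝ) :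
    Ep p (fun x => f x ^ 2) = ∑ T : Finset (Fin n), coeff p f T ^ 2 := by
  have : (fun x => f x ^ 2) =
      fun x => ∑ T : Finset (Fin n), coeff p f T * (f x * chi p T x) := by
    funext x
    rw [sq]
    nth_rewrite 2 [inversion hp hp2 f x]
    rw [Finset.mul_sum]
    exact Finset.sum_congr rfl fun y _ => by ring
  rw [this, Ep_sum]
  refine Finset.sum_congr rfl fun T _ => ?_
  rw [Ep_const_mul, sq]
  rfl

theorem coeff_trunc {p : ℝ} (d : ℕ) (f : (Fin n → Bool) → ℝ) :
    Ep p (fun x => f x * trunc p d f x) =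
      ∑ T ∈ Finset.univ.filter (fun T : Finset (Fin n) => T.card ≤ d), coeff p f T ^ 2 := by
  have : (fun x => f x * trunc p d f x) =
      fun x => ∑ T ∈ Finset.univ.filter (fun T : Finset (Fin n) => T.card ≤ d),
        coeff p f T * (f x * chi p T x) := by
    funext x
    rw [trunc, Finset.mul_sum]
    exact Finset.sum_congr rfl fun y _ => by ring
  rw [this, Ep_sum]
  refine Finset.sum_congr rfl fun T _ => ?_
  rw [Ep_const_mul, sq]
  rfl

theorem dL_update (i : Fin n) (f : (Fin n → Bool) → ℝ) (x : Fin n → Bool) (b : Bool) :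
    dL i f (Function.update x i b) = dL i f x := by
  simp [dL]

theorem coeff_dL_notMem {p : ℝ} (hp : 0 < p) (hp2 : p ≤ 1/2) {i : Fin n}
    {T : Finset (Fin n)} (hi : i ∉ T) (f : (Fin n → Bool) → ℝ) :
    coeff p f (insert i T) = Real.sqrt (p * (1 - p)) * coeff p (dL i f) T := by
  have hs := sig_pos hp hp2
  have hs2 := sig_sq hp hp2
  unfold coeff
  rw [Ep_coord p i, ← Ep_const_mul]
  congr 1
  funext x
  simp only [chi_insert hi, chi_update hi, Function.update_self, dL]
  simp only [if_true, Bool.false_eq_true, if_false]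
  generalize Real.sqrt (p * (1 - p)) = s at *
  field_simp
  linear_combination (f (Function.update x i false) - f (Function.update x i true)) * chi p T x * hs2

theorem coeff_dL_mem {p : ℝ} {i : Fin n}
    {T : Finset (Fin n)} (hi : i ∈ T) (f : (Fin n → Bool) → ℝ) :
    coeff p (dL i f) T = 0 := by
  obtain ⟨T, hT, rfl⟩ : ∃ T', i ∉ T' ∧ insert i T' = T :=
    ⟨T.erase i, Finset.notMem_erase i T, Finset.insert_erase hi⟩
  unfold coeff
  rw [Ep_coord p i]
  have : (fun x => p * (dL i f (Function.update x i true) *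
      chi p (insert i T) (Function.update x i true)) + (1 - p) *
      (dL i f (Function.update x i false) * chi p (insert i T) (Function.update x i false)))
      = fun x => 0 * dL i f x := by
    funext x
    simp only [chi_insert hT, chi_update hT, Function.update_self, dL_update]
    simp
    ring
  rw [this, Ep_const_mul, zero_mul]

/-! ### Hypercontractivity -/

/-- noised multilinear polynomial. -/
noncomputable def poly (p : ℝ) (V : Finset (Fin n)) (c : Finset (Fin n) → ℝ)
    (x : Fin n → Bool) : ℝ :=
  ∑ T ∈ V.powerset, (1/2 : ℝ) ^ T.card * c T * chi p T x

/-- upper sums of squares. -/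
noncomputable def upS (V : Finset (Fin n)) (c : Finset (Fin n) → ℝ) (S : Finset (Fin n)) : ℝ :=
  ∑ T ∈ V.powerset, if S ⊆ T then c T ^ 2 else 0

theorem poly_update {p : ℝ} {V : Finset (Fin n)} {i : Fin n} (hi : i ∉ V)
    (c : Finset (Fin n) → ℝ) (x : Fin n → Bool) (b : Bool) :
    poly p V c (Function.update x i b) = poly p V c x := by
  refine Finset.sum_congr rfl fun T hT => ?_
  rw [chi_update (fun h => hi (Finset.mem_powerset.mp hT h))]

theorem poly_insert {p : ℝ} {V : Finset (Fin n)} {i : Fin n} (hi : i ∉ V)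
    (c : Finset (Fin n) → ℝ) (x : Fin n → Bool) :
    poly p (insert i V) c x = poly p V c x +
      (1/2) * (((if x i then (1 : ℝ) else 0) - p) / Real.sqrt (p * (1 - p))) *
        poly p V (fun T => c (insert i T)) x := by
  unfold poly
  rw [Finset.sum_powerset_insert hi, Finset.mul_sum]
  congr 1
  refine Finset.sum_congr rfl fun T hT => ?_
  have hiT : i ∉ T := fun h => hi (Finset.mem_powerset.mp hT h)
  rw [chi_insert hiT, Finset.card_insert_of_notMem hiT]
  ring

theorem upS_insert_notMem {V : Finset (Fin n)} {i : Fin n} (hi : i ∉ V)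
    (c : Finset (Fin n) → ℝ) {S : Finset (Fin n)} (hS : i ∉ S) :
    upS (insert i V) c S = upS V c S + upS V (fun T => c (insert i T)) S := by
  unfold upS
  rw [Finset.sum_powerset_insert hi]
  congr 1
  refine Finset.sum_congr rfl fun T hT => ?_
  simp only [Finset.subset_insert_iff_of_notMem hS]

theorem upS_insert_mem {V : Finset (Fin n)} {i : Fin n} (hi : i ∉ V)
    (c : Finset (Fin n) → ℝ) {S : Finset (Fin n)} (hS : i ∉ S) :
    upS (insert i V) c (insert i S) = upS V (fun T => c (insert i T)) S := by
  unfold upS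
  rw [Finset.sum_powerset_insert hi]
  rw [Finset.sum_eq_zero, zero_add]
  · refine Finset.sum_congr rfl fun T hT => ?_
    simp only [Finset.insert_subset_insert_iff hS]
  · intro T hT
    rw [if_neg]
    intro h
    exact hi (Finset.mem_powerset.mp hT (h (Finset.mem_insert_self i S)))

theorem upS_nonneg (V : Finset (Fin n)) (c : Finset (Fin n) → ℝ) (S : Finset (Fin n)) :
    0 ≤ upS V c S :=
  Finset.sum_nonneg fun T _ => by split_ifs <;> positivity

theorem one_bit {p s : ℝ} (hp : 0 < p) (hp2 : p ≤ 1/2) (hs : 0 < s) (hs2 : s ^ 2 = p * (1 - p))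
    (a b c d : ℝ) :
    p * ((a + 1/2 * ((1 - p) / s) * b) ^ 2 * (c + 1/2 * ((1 - p) / s) * d) ^ 2) +
    (1 - p) * ((a + 1/2 * ((0 - p) / s) * b) ^ 2 * (c + 1/2 * ((0 - p) / s) * d) ^ 2) ≤
    a ^ 2 * c ^ 2 + a ^ 2 * d ^ 2 + b ^ 2 * c ^ 2 + (p * (1 - p))⁻¹ * (b ^ 2 * d ^ 2) := by
  have hu : (p * (1 - p))⁻¹ = (s⁻¹) ^ 2 := by rw [← hs2]; simp
  have hu1 : (s⁻¹) ^ 2 * (p * (1 - p)) = 1 := by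
    rw [← hs2]; field_simp
  rw [hu]
  rw [div_eq_mul_inv (1 - p) s, div_eq_mul_inv (0 - p) s]
  generalize s⁻¹ = u at *
  have e : p * ((a + 1/2 * ((1 - p) * u) * b) ^ 2 * (c + 1/2 * ((1 - p) * u) * d) ^ 2) +
    (1 - p) * ((a + 1/2 * ((0 - p) * u) * b) ^ 2 * (c + 1/2 * ((0 - p) * u) * d) ^ 2) =
    a ^ 2 * c ^ 2 + 1/4 * (a ^ 2 * d ^ 2 + b ^ 2 * c ^ 2 + 4 * (a * b * c * d))
      + 1/8 * ((1 - 2 * p) * u) * (2 * a * b * d ^ 2 + 2 * b ^ 2 * c * d)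
      + 1/16 * ((1 - 3 * p + 3 * p ^ 2) * u ^ 2) * (b ^ 2 * d ^ 2) := by
    linear_combination (1/4 * (a ^ 2 * d ^ 2 + b ^ 2 * c ^ 2 + 4 * (a * b * c * d))
      + 1/8 * ((1 - 2 * p) * u) * (2 * a * b * d ^ 2 + 2 * b ^ 2 * c * d)
      + 1/16 * ((1 - 3 * p + 3 * p ^ 2) * u ^ 2) * (b ^ 2 * d ^ 2)) * hu1
  rw [e]
  have h4 : (1 - 3 * p + 3 * p ^ 2) * (u ^ 2 * (b ^ 2 * d ^ 2)) ≤ 1 * (u ^ 2 * (b ^ 2 * d ^ 2)) := by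
    refine mul_le_mul_of_nonneg_right ?_ (by positivity)
    nlinarith
  have ht2 : (1 - 2 * p) ^ 2 ≤ 1 := by nlinarith
  have h5 : (1 - 2 * p) ^ 2 * (a ^ 2 * d ^ 2) ≤ 1 * (a ^ 2 * d ^ 2) :=
    mul_le_mul_of_nonneg_right ht2 (by positivity)
  have h6 : (1 - 2 * p) ^ 2 * (b ^ 2 * c ^ 2) ≤ 1 * (b ^ 2 * c ^ 2) :=
    mul_le_mul_of_nonneg_right ht2 (by positivity)
  have n1 : 0 ≤ a ^ 2 * d ^ 2 := by positivity
  have n2 : 0 ≤ b ^ 2 * c ^ 2 := by positivity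
  have n3 : 0 ≤ u ^ 2 * (b ^ 2 * d ^ 2) := by positivity
  nlinarith [sq_nonneg (a * d - b * c), sq_nonneg ((1 - 2 * p) * (a * d) - u * (b * d)),
    sq_nonneg ((1 - 2 * p) * (b * c) - u * (b * d))]

theorem hyper {p : ℝ} (hp : 0 < p) (hp2 : p ≤ 1/2) (V : Finset (Fin n)) :
    ∀ c d : Finset (Fin n) → ℝ,
      Ep p (fun x => poly p V c x ^ 2 * poly p V d x ^ 2) ≤
        ∑ S ∈ V.powerset, ((p * (1 - p))⁻¹) ^ S.card * (upS V c S * upS V d S) := by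
  induction V using Finset.induction_on with
  | empty =>
    intro c d
    have h1 : Ep p (fun _ : Fin n → Bool => (1 : ℝ)) = 1 := by
      unfold Ep
      have := Finset.prod_univ_sum (fun _ : Fin n => (Finset.univ : Finset Bool))
        (fun _ b => if b then p else 1 - p)
      simp only [Fintype.piFinset_univ] at this
      simp only [mul_one]
      rw [← this]
      simp
    have : (fun x : Fin n → Bool => poly p ∅ c x ^ 2 * poly p ∅ d x ^ 2) =
        fun x => (c ∅ ^ 2 * d ∅ ^ 2) * 1 := by
      funext x
      simp [poly, chi]
    rw [this, Ep_const_mul, h1]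
    simp [upS]
  | insert i V hi ih =>
    intro c d
    set c' : Finset (Fin n) → ℝ := fun T => c (insert i T) with hc'
    set d' : Finset (Fin n) → ℝ := fun T => d (insert i T) with hd'
    have step : Ep p (fun x => poly p (insert i V) c x ^ 2 * poly p (insert i V) d x ^ 2) ≤
        Ep p (fun x => poly p V c x ^ 2 * poly p V d x ^ 2 + poly p V c x ^ 2 * poly p V d' x ^ 2
          + poly p V c' x ^ 2 * poly p V d x ^ 2
          + (p * (1 - p))⁻¹ * (poly p V c' x ^ 2 * poly p V d' x ^ 2)) := by
      rw [Ep_coord p i]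
      refine Ep_mono hp hp2 fun x => ?_
      simp only [poly_insert hi, poly_update hi, Function.update_self]
      simp only [if_true, Bool.false_eq_true, if_false]
      exact one_bit hp hp2 (sig_pos hp hp2) (sig_sq hp hp2) _ _ _ _
    refine step.trans ?_
    rw [Ep_add, Ep_add, Ep_add, Ep_const_mul, Finset.sum_powerset_insert hi]
    have hq : 0 < (p * (1 - p))⁻¹ := inv_pos.mpr (mul_pos hp (by linarith))
    have e1 : ∑ S ∈ V.powerset, ((p * (1 - p))⁻¹) ^ S.card *
        (upS (insert i V) c S * upS (insert i V) d S) =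
        ∑ S ∈ V.powerset, ((p * (1 - p))⁻¹) ^ S.card * (upS V c S * upS V d S) +
        ∑ S ∈ V.powerset, ((p * (1 - p))⁻¹) ^ S.card * (upS V c S * upS V d' S) +
        ∑ S ∈ V.powerset, ((p * (1 - p))⁻¹) ^ S.card * (upS V c' S * upS V d S) +
        ∑ S ∈ V.powerset, ((p * (1 - p))⁻¹) ^ S.card * (upS V c' S * upS V d' S) := by
      rw [← Finset.sum_add_distrib, ← Finset.sum_add_distrib, ← Finset.sum_add_distrib]
      refine Finset.sum_congr rfl fun S hS => ?_
      have hiS : i ∉ S := fun h => hi (Finset.mem_powerset.mp hS h)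
      rw [upS_insert_notMem hi c hiS, upS_insert_notMem hi d hiS]
      ring
    have e2 : ∑ S ∈ V.powerset, ((p * (1 - p))⁻¹) ^ (insert i S).card *
        (upS (insert i V) c (insert i S) * upS (insert i V) d (insert i S)) =
        (p * (1 - p))⁻¹ *
        ∑ S ∈ V.powerset, ((p * (1 - p))⁻¹) ^ S.card * (upS V c' S * upS V d' S) := by
      rw [Finset.mul_sum]
      refine Finset.sum_congr rfl fun S hS => ?_
      have hiS : i ∉ S := fun h => hi (Finset.mem_powerset.mp hS h)
      rw [upS_insert_mem hi c hiS, upS_insert_mem hi d hiS, Finset.card_insert_of_notMem hiS]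
      ring
    rw [e1, e2]
    have n4 : 0 ≤ ∑ S ∈ V.powerset, ((p * (1 - p))⁻¹) ^ S.card * (upS V c' S * upS V d' S) :=
      Finset.sum_nonneg fun S _ => mul_nonneg (by positivity)
        (mul_nonneg (upS_nonneg _ _ _) (upS_nonneg _ _ _))
    have := mul_le_mul_of_nonneg_left (ih c' d') hq.le
    linarith [ih c d, ih c d', ih c' d]

/-! ### Generalised influences of monotone functions -/

theorem restrict1_insert (i : Fin n) (S : Finset (Fin n)) (f : (Fin n → Bool) → ℝ)
    (x : Fin n → Bool) : restrict1 (insert i S) f x = restrict1 S f (Function.update x i true) := by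
  unfold restrict1
  congr 1
  funext j
  by_cases hS : j ∈ S
  · simp [hS]
  · by_cases hj : j = i
    · subst hj
      simp
    · simp [hS, hj]

theorem restrict0_insert (i : Fin n) (S : Finset (Fin n)) (f : (Fin n → Bool) → ℝ)
    (x : Fin n → Bool) :
    restrict0 (insert i S) f x = restrict0 S f (Function.update x i false) := by
  unfold restrict0
  congr 1
  funext j
  by_cases hS : j ∈ S
  · simp [hS]
  · by_cases hj : j = i
    · subst hj
      simp
    · simp [hS, hj]

theorem restrict1_mono (S : Finset (Fin n)) {f : (Fin n → Bool) → ℝ} (hf : Mono f) :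
    Mono (restrict1 S f) := by
  intro x y h
  refine hf _ _ fun i => ?_
  split_ifs
  · exact le_rfl
  · exact h i

theorem restrict0_mono (S : Finset (Fin n)) {f : (Fin n → Bool) → ℝ} (hf : Mono f) :
    Mono (restrict0 S f) := by
  intro x y h
  refine hf _ _ fun i => ?_
  split_ifs
  · exact le_rfl
  · exact h i

theorem restrict0_le_restrict1 (S : Finset (Fin n)) {f : (Fin n → Bool) → ℝ} (hf : Mono f)
    (x : Fin n → Bool) : restrict0 S f x ≤ restrict1 S f x := by
  refine hf _ _ fun i => ?_
  split_ifs
  · exact Bool.false_le _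
  · exact le_rfl

theorem update_le_true (x : Fin n → Bool) (i : Fin n) (b : Bool) (j : Fin n) :
    Function.update x i b j ≤ Function.update x i true j := by
  by_cases h : j = i
  · subst h
    simp [Bool.le_true]
  · simp [h]

theorem false_le_update (x : Fin n → Bool) (i : Fin n) (b : Bool) (j : Fin n) :
    Function.update x i false j ≤ Function.update x i b j := by
  by_cases h : j = i
  · subst h
    simp [Bool.false_le]
  · simp [h]

theorem le_update_true (x : Fin n → Bool) (i : Fin n) (j : Fin n) :
    x j ≤ Function.update x i true j := by
  by_cases h : j = i
  · subst h
    simp [Bool.le_true]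
  · simp [h]

theorem exists_deriv {p : ℝ} (hp : 0 < p) (hp2 : p ≤ 1/2) {f : (Fin n → Bool) → ℝ}
    (hf : Mono f) (hb : ∀ x, f x = 0 ∨ f x = 1) (S : Finset (Fin n)) :
    ∃ G : (Fin n → Bool) → ℝ, (∀ x, |G x| ≤ 2 ^ S.card) ∧
      (∀ x, restrict1 S f x = restrict0 S f x → G x = if S = ∅ then f x else 0) ∧
      ∀ T, Disjoint S T → coeff p f (S ∪ T) = Real.sqrt (p * (1 - p)) ^ S.card * coeff p G T := by
  induction S using Finset.induction_on with
  | empty =>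
    refine ⟨f, ?_, ?_, ?_⟩
    · intro x
      rcases hb x with h | h <;> simp [h]
    · simp
    · intro T _
      simp
  | insert i S hi ih =>
    obtain ⟨G, h1, h2, h3⟩ := ih
    refine ⟨dL i G, ?_, ?_, ?_⟩
    · intro x
      rw [Finset.card_insert_of_notMem hi, pow_succ]
      unfold dL
      have := abs_sub (G (Function.update x i true)) (G (Function.update x i false))
      linarith [h1 (Function.update x i true), h1 (Function.update x i false)]
    · intro x hx
      rw [restrict1_insert, restrict0_insert] at hx
      have key : ∀ b, G (Function.update x i b) =
          if S = ∅ then f (Function.update x i b) else 0 := by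
        intro b
        apply h2
        apply le_antisymm _ (restrict0_le_restrict1 S hf _)
        have a1 := restrict1_mono S hf _ _ (update_le_true x i b)
        have a2 := restrict0_mono S hf _ _ (false_le_update x i b)
        linarith
      by_cases hS : S = ∅
      · subst hS
        simp [restrict1, restrict0] at hx
        simp [dL, key, hx]
      · simp [dL, key, hS]
    · intro T hT
      rw [Finset.disjoint_insert_left] at hT
      have hd : Disjoint S (insert i T) := by
        rw [Finset.disjoint_insert_right]
        exact ⟨hi, hT.2⟩
      have := h3 (insert i T) hd
      rw [Finset.insert_union, ← Finset.union_insert, this, coeff_dL_notMem hp hp2 hT.1,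
        Finset.card_insert_of_notMem hi]
      ring

theorem upS_le {p : ℝ} (hp : 0 < p) (hp2 : p ≤ 1/2) {f : (Fin n → Bool) → ℝ}
    (hf : Mono f) (hb : ∀ x, f x = 0 ∨ f x = 1) {S : Finset (Fin n)} (hS : S ≠ ∅) :
    upS Finset.univ (coeff p f) S ≤
      (p * (1 - p)) ^ S.card * (4 ^ S.card * (Ep p (restrict1 S f) - Ep p (restrict0 S f))) := by
  obtain ⟨G, h1, h2, h3⟩ := exists_deriv hp hp2 hf hb S
  have hE : Ep p (fun x => G x ^ 2) ≤
      4 ^ S.card * (Ep p (restrict1 S f) - Ep p (restrict0 S f)) := by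
    rw [← Ep_sub, ← Ep_const_mul]
    refine Ep_mono hp hp2 fun x => ?_
    by_cases hx : restrict1 S f x = restrict0 S f x
    · have := h2 x hx
      rw [if_neg hS] at this
      rw [hx, this]
      simp
    · have hle := restrict0_le_restrict1 S hf x
      have e : restrict1 S f x - restrict0 S f x = 1 := by
        have b1 : restrict1 S f x = 0 ∨ restrict1 S f x = 1 := hb _
        have b0 : restrict0 S f x = 0 ∨ restrict0 S f x = 1 := hb _
        rcases b1 with b1 | b1 <;> rcases b0 with b0 | b0 <;> rw [b1, b0] at hle hx ⊢ <;>
          first | exact absurd rfl hx | (exfalso; linarith) | norm_num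
      rw [e, mul_one, ← sq_abs]
      calc |G x| ^ 2 ≤ (2 ^ S.card) ^ 2 := pow_le_pow_left₀ (abs_nonneg _) (h1 x) 2
        _ = 4 ^ S.card := by rw [← pow_mul, mul_comm, pow_mul]; norm_num
  have hq : 0 ≤ (p * (1 - p)) ^ S.card := pow_nonneg (mul_nonneg hp.le (by linarith)) _
  refine le_trans ?_ (mul_le_mul_of_nonneg_left hE hq)
  rw [parseval hp hp2 G, Finset.mul_sum]
  unfold upS
  rw [Finset.powerset_univ, ← Finset.sum_filter]
  have e : ∀ T ∈ Finset.univ.filter (fun T => S ⊆ T), coeff p f T ^ 2 =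
      (p * (1 - p)) ^ S.card * coeff p G (T \ S) ^ 2 := by
    intro T hT
    have hT := (Finset.mem_filter.mp hT).2
    have := h3 (T \ S) Finset.disjoint_sdiff
    rw [Finset.union_sdiff_of_subset hT] at this
    rw [this, mul_pow, ← pow_mul, mul_comm S.card 2, pow_mul, sig_sq hp hp2]
  rw [Finset.sum_congr rfl e]
  have inj : Set.InjOn (fun T : Finset (Fin n) => T \ S)
      (Finset.univ.filter (fun T => S ⊆ T) : Finset (Finset (Fin n))) := by
    intro T hT T' hT' h
    have hT : S ⊆ T := by simpa using hT
    have hT' : S ⊆ T' := by simpa using hT'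
    have h : T \ S = T' \ S := h
    rw [← Finset.union_sdiff_of_subset hT, ← Finset.union_sdiff_of_subset hT', h]
  rw [← Finset.sum_image (f := fun T => (p * (1 - p)) ^ S.card * coeff p G T ^ 2) inj]
  exact Finset.sum_le_univ_sum_of_nonneg fun T => mul_nonneg hq (sq_nonneg _)

theorem restrict_avg {p : ℝ} (hp : 0 < p) (hp2 : p ≤ 1/2) {f : (Fin n → Bool) → ℝ}
    (hf : Mono f) (S : Finset (Fin n)) :
    Ep p f ≤ (1 - p) ^ S.card * Ep p (restrict0 S f) +
      (1 - (1 - p) ^ S.card) * Ep p (restrict1 S f) := by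
  induction S using Finset.induction_on with
  | empty =>
    have : restrict0 ∅ f = f := by
      funext x
      simp [restrict0]
    simp [this]
  | insert i S hi ih =>
    rw [Finset.card_insert_of_notMem hi, pow_succ]
    have a0 : Ep p (restrict0 S f) ≤ p * Ep p (restrict1 (insert i S) f) +
        (1 - p) * Ep p (restrict0 (insert i S) f) := by
      rw [Ep_coord p i, ← Ep_const_mul, ← Ep_const_mul, ← Ep_add]
      refine Ep_mono hp hp2 fun x => ?_
      rw [restrict0_insert, restrict1_insert]
      have := mul_le_mul_of_nonneg_left
        (restrict0_le_restrict1 S hf (Function.update x i true)) hp.le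
      linarith
    have a1 : Ep p (restrict1 S f) ≤ Ep p (restrict1 (insert i S) f) := by
      refine Ep_mono hp hp2 fun x => ?_
      rw [restrict1_insert]
      exact restrict1_mono S hf _ _ (le_update_true x i)
    have q0 : 0 ≤ (1 - p) ^ S.card := pow_nonneg (by linarith) _
    have q1 : (1 - p) ^ S.card ≤ 1 := pow_le_one₀ (by linarith) (by linarith)
    have := mul_le_mul_of_nonneg_left a0 q0
    have := mul_le_mul_of_nonneg_left a1 (sub_nonneg.mpr q1)
    nlinarith

theorem upS_global {p δ : ℝ} (hp : 0 < p) (hp2 : p ≤ 1/2) {f : (Fin n → Bool) → ℝ}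
    (hf : Mono f) (hb : ∀ x, f x = 0 ∨ f x = 1) {S : Finset (Fin n)} (hS : S ≠ ∅)
    (hδ : Ep p (restrict1 S f) ≤ Ep p f + δ) :
    upS Finset.univ (coeff p f) S ≤ (p * (1 - p)) ^ S.card * (8 ^ S.card * δ) := by
  refine (upS_le hp hp2 hf hb hS).trans ?_
  have hq : 0 ≤ (p * (1 - p)) ^ S.card := pow_nonneg (mul_nonneg hp.le (by linarith)) _
  refine mul_le_mul_of_nonneg_left ?_ hq
  have h := restrict_avg hp hp2 hf S
  have hd : 0 ≤ Ep p (restrict1 S f) - Ep p (restrict0 S f) :=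
    sub_nonneg.mpr (Ep_mono hp hp2 (restrict0_le_restrict1 S hf))
  have h1 : (1 - p) ^ S.card * (Ep p (restrict1 S f) - Ep p (restrict0 S f)) ≤ δ := by
    linarith
  have h2 : (1/2 : ℝ) ^ S.card ≤ (1 - p) ^ S.card :=
    pow_le_pow_left₀ (by norm_num) (by linarith) _
  have h3 : (1/2 : ℝ) ^ S.card * (Ep p (restrict1 S f) - Ep p (restrict0 S f)) ≤ δ :=
    (mul_le_mul_of_nonneg_right h2 hd).trans h1
  have e : (4 : ℝ) ^ S.card = 8 ^ S.card * (1/2) ^ S.card := by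
    rw [← mul_pow]; norm_num
  rw [e, mul_assoc]
  exact mul_le_mul_of_nonneg_left h3 (by positivity)

/-! ### Combining -/

theorem univ_eq_insert (i : Fin n) :
    (Finset.univ : Finset (Fin n)) = insert i (Finset.univ.erase i) :=
  (Finset.insert_erase (Finset.mem_univ i)).symm

theorem upS_dL {p : ℝ} (hp : 0 < p) (hp2 : p ≤ 1/2) (f : (Fin n → Bool) → ℝ) (i : Fin n)
    {S : Finset (Fin n)} (hS : i ∉ S) :
    p * (1 - p) * upS Finset.univ (coeff p (dL i f)) S =
      upS Finset.univ (coeff p f) (insert i S) := by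
  have hi : i ∉ Finset.univ.erase i := Finset.notMem_erase i _
  rw [univ_eq_insert i, upS_insert_notMem hi _ hS, upS_insert_mem hi _ hS]
  have z : upS (Finset.univ.erase i) (fun T => coeff p (dL i f) (insert i T)) S = 0 := by
    refine Finset.sum_eq_zero fun T _ => ?_
    dsimp only
    rw [coeff_dL_mem (Finset.mem_insert_self i T)]
    simp
  rw [z, add_zero]
  unfold upS
  rw [Finset.mul_sum]
  refine Finset.sum_congr rfl fun T hT => ?_
  have hiT : i ∉ T := fun h => hi (Finset.mem_powerset.mp hT h)
  dsimp only
  rw [coeff_dL_notMem hp hp2 hiT, mul_pow, sig_sq hp hp2]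
  split_ifs <;> ring

theorem upS_dL_mem {p : ℝ} (f : (Fin n → Bool) → ℝ) (i : Fin n)
    {S : Finset (Fin n)} (hS : i ∈ S) :
    upS Finset.univ (coeff p (dL i f)) S = 0 := by
  refine Finset.sum_eq_zero fun T _ => ?_
  split_ifs with h
  · rw [coeff_dL_mem (h hS)]
    simp
  · rfl

theorem sum_dL {p : ℝ} (hp : 0 < p) (hp2 : p ≤ 1/2) (f : (Fin n → Bool) → ℝ) (i : Fin n)
    (φ : ℕ → ℝ) :
    p * (1 - p) * ∑ T : Finset (Fin n), φ (T.card + 1) * coeff p (dL i f) T ^ 2 =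
      ∑ T : Finset (Fin n), if i ∈ T then φ T.card * coeff p f T ^ 2 else 0 := by
  have hi : i ∉ Finset.univ.erase i := Finset.notMem_erase i _
  have hu : (Finset.univ : Finset (Finset (Fin n))) =
      (insert i (Finset.univ.erase i)).powerset := by
    rw [← univ_eq_insert, Finset.powerset_univ]
  rw [hu, Finset.sum_powerset_insert hi, Finset.sum_powerset_insert hi]
  have z1 : ∑ T ∈ (Finset.univ.erase i).powerset,
      φ ((insert i T).card + 1) * coeff p (dL i f) (insert i T) ^ 2 = 0 := by
    refine Finset.sum_eq_zero fun T _ => ?_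
    rw [coeff_dL_mem (Finset.mem_insert_self i T)]
    simp
  have z2 : (∑ T ∈ (Finset.univ.erase i).powerset,
      if i ∈ T then φ T.card * coeff p f T ^ 2 else 0) = 0 := by
    refine Finset.sum_eq_zero fun T hT => ?_
    have hiT : i ∉ T := fun h => hi (Finset.mem_powerset.mp hT h)
    rw [if_neg hiT]
  rw [z1, z2, add_zero, zero_add, Finset.mul_sum]
  refine Finset.sum_congr rfl fun T hT => ?_
  have hiT : i ∉ T := fun h => hi (Finset.mem_powerset.mp hT h)
  rw [if_pos (Finset.mem_insert_self i T), coeff_dL_notMem hp hp2 hiT, mul_pow, sig_sq hp hp2,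
    Finset.card_insert_of_notMem hiT]
  ring

theorem sum_sum_dL {p : ℝ} (hp : 0 < p) (hp2 : p ≤ 1/2) (f : (Fin n → Bool) → ℝ)
    (φ : ℕ → ℝ) :
    p * (1 - p) * ∑ i, ∑ T : Finset (Fin n), φ (T.card + 1) * coeff p (dL i f) T ^ 2 =
      ∑ T : Finset (Fin n), (T.card : ℝ) * (φ T.card * coeff p f T ^ 2) := by
  rw [Finset.mul_sum]
  simp only [sum_dL hp hp2 f]
  rw [Finset.sum_comm]
  refine Finset.sum_congr rfl fun T _ => ?_
  rw [← Finset.sum_filter]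
  simp

theorem sum_upS (c : Finset (Fin n) → ℝ) :
    ∑ S : Finset (Fin n), upS Finset.univ c S = ∑ T : Finset (Fin n), 2 ^ T.card * c T ^ 2 := by
  unfold upS
  rw [Finset.powerset_univ, Finset.sum_comm]
  refine Finset.sum_congr rfl fun T _ => ?_
  rw [← Finset.sum_filter, Finset.sum_const, nsmul_eq_mul]
  have : Finset.univ.filter (fun S => S ⊆ T) = T.powerset := by
    ext S
    simp
  rw [this, Finset.card_powerset]
  push_cast
  rfl

theorem trunc_four {p δ : ℝ} (hp : 0 < p) (hp2 : p ≤ 1/2) (hδ : 0 ≤ δ) (d : ℕ)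
    (g : (Fin n → Bool) → ℝ)
    (hg : ∀ S : Finset (Fin n), S.card ≤ d →
      upS Finset.univ (coeff p g) S ≤ (p * (1 - p)) ^ S.card * (8 ^ (d + 1) * δ)) :
    Ep p (fun x => trunc p d g x ^ 4) ≤ 256 ^ d * 8 * δ * Ep p (fun x => g x ^ 2) := by
  set c : Finset (Fin n) → ℝ := fun T => if T.card ≤ d then 2 ^ T.card * coeff p g T else 0 with hc
  have hpoly : ∀ x, poly p Finset.univ c x = trunc p d g x := by
    intro x
    unfold poly trunc
    rw [Finset.powerset_univ, Finset.sum_filter]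
    refine Finset.sum_congr rfl fun T _ => ?_
    simp only [hc]
    split_ifs
    · rw [← mul_assoc, ← mul_pow]
      norm_num
    · simp
  have hc2 : ∀ T, c T ^ 2 ≤ 4 ^ d * coeff p g T ^ 2 := by
    intro T
    simp only [hc]
    split_ifs with h
    · rw [mul_pow, ← pow_mul, mul_comm T.card 2, pow_mul]
      norm_num
      exact mul_le_mul_of_nonneg_right (pow_le_pow_right₀ (by norm_num) h) (sq_nonneg _)
    · have : 0 ≤ 4 ^ d * coeff p g T ^ 2 := by positivity
      simpa using this
  have hq : 0 < p * (1 - p) := mul_pos hp (by linarith)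
  have e4 : (fun x => trunc p d g x ^ 4) =
      fun x => poly p Finset.univ c x ^ 2 * poly p Finset.univ c x ^ 2 := by
    funext x
    rw [hpoly]
    ring
  rw [e4]
  refine (hyper hp hp2 Finset.univ c c).trans ?_
  rw [Finset.powerset_univ]
  have hterm : ∀ S : Finset (Fin n), ((p * (1 - p))⁻¹) ^ S.card *
      (upS Finset.univ c S * upS Finset.univ c S) ≤
      (4 ^ d * (8 ^ (d + 1) * δ)) * upS Finset.univ c S := by
    intro S
    by_cases hS : S.card ≤ d
    · rw [← mul_assoc]
      refine mul_le_mul_of_nonneg_right ?_ (upS_nonneg _ _ _)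
      rw [inv_pow, inv_mul_le_iff₀ (pow_pos hq _)]
      have a : upS Finset.univ c S ≤ 4 ^ d * upS Finset.univ (coeff p g) S := by
        unfold upS
        rw [Finset.mul_sum]
        refine Finset.sum_le_sum fun T _ => ?_
        split_ifs
        · exact hc2 T
        · simp
      have b := mul_le_mul_of_nonneg_left (hg S hS) (show (0 : ℝ) ≤ 4 ^ d by positivity)
      linarith
    · have : upS Finset.univ c S = 0 := by
        refine Finset.sum_eq_zero fun T _ => ?_
        split_ifs with h
        · have := Finset.card_le_card h
          simp only [hc]
          rw [if_neg (by omega)]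
          simp
        · rfl
      rw [this]
      simp
  refine (Finset.sum_le_sum fun S _ => hterm S).trans ?_
  rw [← Finset.mul_sum, sum_upS, parseval hp hp2 g]
  have h2 : ∑ T : Finset (Fin n), (2 : ℝ) ^ T.card * c T ^ 2 ≤
      8 ^ d * ∑ T : Finset (Fin n), coeff p g T ^ 2 := by
    rw [Finset.mul_sum]
    refine Finset.sum_le_sum fun T _ => ?_
    by_cases h : T.card ≤ d
    · have e : (8 : ℝ) ^ d = 2 ^ d * 4 ^ d := by rw [← mul_pow]; norm_num
      rw [e, mul_assoc]
      exact mul_le_mul (pow_le_pow_right₀ (by norm_num) h) (hc2 T) (sq_nonneg _) (by positivity)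
    · simp only [hc]
      rw [if_neg h]
      have : 0 ≤ 8 ^ d * coeff p g T ^ 2 := by positivity
      simpa using this
  refine (mul_le_mul_of_nonneg_left h2 (by positivity)).trans (le_of_eq ?_)
  have e : (256 : ℝ) ^ d = 4 ^ d * 8 ^ d * 8 ^ d := by rw [← mul_pow, ← mul_pow]; norm_num
  rw [e]
  ring

theorem low_weight {p δ η : ℝ} (hp : 0 < p) (hp2 : p ≤ 1/2) (hδ : 0 ≤ δ) (hη : 0 ≤ η) (d : ℕ)
    (hdη : 256 ^ d * 8 * δ ≤ η ^ 4)
    (g : (Fin n → Bool) → ℝ) (hb : ∀ x, g x = 0 ∨ g x = 1)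
    (hg : ∀ S : Finset (Fin n), S.card ≤ d →
      upS Finset.univ (coeff p g) S ≤ (p * (1 - p)) ^ S.card * (8 ^ (d + 1) * δ)) :
    ∑ T ∈ Finset.univ.filter (fun T : Finset (Fin n) => T.card ≤ d), coeff p g T ^ 2 ≤
      η * Ep p (fun x => g x ^ 2) := by
  have h4 := trunc_four hp hp2 hδ d g hg
  rw [← coeff_trunc]
  set u := trunc p d g with hu
  set m := Ep p (fun x => g x ^ 2) with hm
  have hm0 : 0 ≤ m := Ep_nonneg hp hp2 fun x => sq_nonneg _
  have hgg : ∀ x, g x ^ 2 = g x := fun x => by rcases hb x with h | h <;> simp [h]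
  have c1 : (Ep p fun x => g x * u x) ^ 2 ≤ m * Ep p (fun x => g x * u x ^ 2) := by
    have := Ep_cs hp hp2 g (fun x => g x * u x)
    have e1 : (fun x => g x * (g x * u x)) = fun x => g x * u x := by
      funext x
      rw [← mul_assoc, ← sq, hgg]
    have e2 : (fun x => (g x * u x) ^ 2) = fun x => g x * u x ^ 2 := by
      funext x
      rw [mul_pow, hgg]
    rw [e1, e2] at this
    exact this
  have c2 : (Ep p fun x => g x * u x ^ 2) ^ 2 ≤ m * Ep p (fun x => u x ^ 4) := by
    have := Ep_cs hp hp2 g (fun x => u x ^ 2)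
    simp only [← pow_mul] at this
    exact this
  set W := Ep p fun x => g x * u x
  set A := Ep p fun x => g x * u x ^ 2
  have c3 : W ^ 4 ≤ m ^ 2 * A ^ 2 := by
    have := pow_le_pow_left₀ (sq_nonneg W) c1 2
    calc W ^ 4 = (W ^ 2) ^ 2 := by ring
      _ ≤ (m * A) ^ 2 := this
      _ = _ := by ring
  have c4 : W ^ 4 ≤ (η * m) ^ 4 := by
    calc W ^ 4 ≤ m ^ 2 * A ^ 2 := c3
      _ ≤ m ^ 2 * (m * Ep p (fun x => u x ^ 4)) := mul_le_mul_of_nonneg_left c2 (by positivity)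
      _ ≤ m ^ 2 * (m * (256 ^ d * 8 * δ * m)) := by gcongr
      _ ≤ m ^ 2 * (m * (η ^ 4 * m)) := by gcongr
      _ = _ := by ring
  exact le_of_pow_le_pow_left₀ (by norm_num) (by positivity) c4

theorem core {p δ η K ε : ℝ} (hp : 0 < p) (hp2 : p ≤ 1/2) (hδ : 0 ≤ δ) (hη : 0 ≤ η) (d : ℕ)
    (hdη : 256 ^ d * 8 * δ ≤ η ^ 4) (hε : 0 < ε) (hε2 : ε < 1/2)
    {f : (Fin n → Bool) → ℝ} (hf : Mono f) (hb : ∀ x, f x = 0 ∨ f x = 1)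
    (h1 : ε ≤ Ep p f) (h2 : Ep p f ≤ 1 - ε) (hK : 0 ≤ K) (hI : totalInf p f ≤ K / p)
    (hglob : ∀ S : Finset (Fin n), S.card ≤ d + 1 → Ep p (restrict1 S f) ≤ Ep p f + δ) :
    ε / 2 ≤ η * K + K / (d + 2) := by
  have hq : 0 < p * (1 - p) := mul_pos hp (by linarith)
  have hbd : ∀ i x, dL i f x = 0 ∨ dL i f x = 1 := by
    intro i x
    have hle := hf _ _ (false_le_update x i true)
    unfold dL
    rcases hb (Function.update x i true) with a | a <;>
      rcases hb (Function.update x i false) with b | b <;> rw [a, b] at hle ⊢ <;>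
      first | (left; norm_num; done) | (right; norm_num; done) | (exfalso; linarith)
  have hinf : totalInf p f = ∑ i, Ep p (fun x => dL i f x ^ 2) := by
    unfold totalInf
    refine Finset.sum_congr rfl fun i _ => ?_
    congr 1
    funext x
    have hx : ∀ b, x i = b → x = Function.update x i b := by
      rintro b rfl
      simp
    have hne : f (Function.update x i (!x i)) = f x ↔ dL i f x = 0 := by
      unfold dL
      rw [sub_eq_zero]
      cases hxi : x i
      · rw [← hx false hxi]
        simp
      · rw [← hx true hxi]
        simp
        exact eq_comm
    by_cases h : dL i f x = 0
    · rw [if_pos (hne.mpr h), h]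
      simp
    · rw [if_neg (fun h' => h (hne.mp h')), (hbd i x).resolve_left h]
      simp
  have hIK : p * (1 - p) * ∑ i, Ep p (fun x => dL i f x ^ 2) ≤ K := by
    rw [← hinf]
    calc p * (1 - p) * totalInf p f ≤ p * (1 - p) * (K / p) := mul_le_mul_of_nonneg_left hI hq.le
      _ = (1 - p) * K := by field_simp
      _ ≤ K := by nlinarith
  -- total weight
  have t1 : ∑ T : Finset (Fin n), (T.card : ℝ) * coeff p f T ^ 2 ≤ K := by
    have := sum_sum_dL hp hp2 f (fun _ => 1)
    simp only [one_mul] at this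
    rw [← this]
    simp only [← parseval hp hp2]
    exact hIK
  have t2 : ∑ T : Finset (Fin n), (T.card : ℝ) *
      ((if T.card ≤ d + 1 then 1 else 0) * coeff p f T ^ 2) ≤ η * K := by
    have := sum_sum_dL hp hp2 f (fun k => if k ≤ d + 1 then 1 else 0)
    rw [← this]
    have hi : ∀ i, ∑ T : Finset (Fin n), (if T.card + 1 ≤ d + 1 then 1 else 0) *
        coeff p (dL i f) T ^ 2 ≤ η * Ep p (fun x => dL i f x ^ 2) := by
      intro i
      have hl := low_weight hp hp2 hδ hη d hdη (dL i f) (hbd i) (by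
        intro S hS
        by_cases hiS : i ∈ S
        · rw [upS_dL_mem f i hiS]
          positivity
        · have hg := upS_global hp hp2 hf hb (Finset.insert_ne_empty i S)
            (hglob (insert i S) (by rw [Finset.card_insert_of_notMem hiS]; omega))
          rw [← upS_dL hp hp2 f i hiS, Finset.card_insert_of_notMem hiS, pow_succ',
            mul_assoc (p * (1 - p)) ((p * (1 - p)) ^ S.card)] at hg
          have hg := le_of_mul_le_mul_left hg hq
          refine hg.trans ?_
          refine mul_le_mul_of_nonneg_left ?_ (by positivity)
          refine mul_le_mul_of_nonneg_right ?_ hδ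
          exact pow_le_pow_right₀ (by norm_num) (by omega))
      rw [Finset.sum_filter] at hl
      refine le_trans (le_of_eq ?_) hl
      refine Finset.sum_congr rfl fun T _ => ?_
      by_cases h : T.card ≤ d <;> simp [h]
    calc p * (1 - p) * ∑ i, ∑ T : Finset (Fin n), (if T.card + 1 ≤ d + 1 then 1 else 0) *
        coeff p (dL i f) T ^ 2 ≤ p * (1 - p) * ∑ i, η * Ep p (fun x => dL i f x ^ 2) :=
          mul_le_mul_of_nonneg_left (Finset.sum_le_sum fun i _ => hi i) hq.le
      _ = η * (p * (1 - p) * ∑ i, Ep p (fun x => dL i f x ^ 2)) := by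
          rw [← Finset.mul_sum]; ring
      _ ≤ η * K := mul_le_mul_of_nonneg_left hIK hη
  have hpar : ∑ T : Finset (Fin n), coeff p f T ^ 2 = Ep p f := by
    rw [← parseval hp hp2 f]
    congr 1
    funext x
    rcases hb x with h | h <;> simp [h]
  have h0 : coeff p f ∅ = Ep p f := by simp [coeff, chi]
  have hpt : ∀ T : Finset (Fin n), coeff p f T ^ 2 ≤
      (if T = ∅ then coeff p f T ^ 2 else 0) +
      (T.card : ℝ) * ((if T.card ≤ d + 1 then 1 else 0) * coeff p f T ^ 2) +
      ((d : ℝ) + 2)⁻¹ * ((T.card : ℝ) * coeff p f T ^ 2) := by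
    intro T
    have hd : (0 : ℝ) < (d : ℝ) + 2 := by positivity
    by_cases hT : T = ∅
    · simp [hT]
    · have hc1 : (1 : ℝ) ≤ T.card := by
        exact_mod_cast Finset.card_pos.mpr (Finset.nonempty_iff_ne_empty.mpr hT)
      rw [if_neg hT]
      by_cases hTd : T.card ≤ d + 1
      · rw [if_pos hTd]
        have : 0 ≤ ((d : ℝ) + 2)⁻¹ * ((T.card : ℝ) * coeff p f T ^ 2) := by positivity
        nlinarith [sq_nonneg (coeff p f T)]
      · rw [if_neg hTd]
        have hcd : (d : ℝ) + 2 ≤ T.card := by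
          have : d + 2 ≤ T.card := by omega
          exact_mod_cast this
        have : coeff p f T ^ 2 ≤ ((d : ℝ) + 2)⁻¹ * ((T.card : ℝ) * coeff p f T ^ 2) := by
          rw [le_inv_mul_iff₀ hd]
          exact mul_le_mul_of_nonneg_right hcd (sq_nonneg _)
        simpa using this
  have hsum := Finset.sum_le_sum (s := Finset.univ) fun T _ => hpt T
  rw [Finset.sum_add_distrib, Finset.sum_add_distrib, ← Finset.mul_sum, hpar] at hsum
  simp only [Finset.sum_ite_eq', Finset.mem_univ, if_true, h0] at hsum
  have t3 : ((d : ℝ) + 2)⁻¹ * ∑ T : Finset (Fin n), (T.card : ℝ) * coeff p f T ^ 2 ≤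
      K / (d + 2) := by
    rw [div_eq_inv_mul]
    exact mul_le_mul_of_nonneg_left t1 (by positivity)
  have hvar : ε / 2 ≤ Ep p f - Ep p f ^ 2 := by nlinarith
  linarith

theorem numeric {y δ η : ℝ} (hy : 2 ≤ y) (d : ℕ) (hd : (d : ℝ) ≤ 5 * y)
    (hδ : δ = Real.exp (-(65 * y))) (hη : η = 1 / (8 * y)) :
    256 ^ d * 8 * δ ≤ η ^ 4 := by
  have he : (2.7 : ℝ) ≤ Real.exp 1 := by linarith [Real.exp_one_gt_d9]
  have h8 : (8 : ℝ) ≤ Real.exp (3 * y) := by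
    have : Real.exp 1 ^ 3 = Real.exp 3 := by rw [← Real.exp_nat_mul]; norm_num
    have h3 : (2.7 : ℝ) ^ 3 ≤ Real.exp 1 ^ 3 := pow_le_pow_left₀ (by norm_num) he 3
    have : Real.exp 3 ≤ Real.exp (3 * y) := Real.exp_le_exp.mpr (by linarith)
    norm_num at h3
    linarith
  have h256 : (256 : ℝ) ^ d ≤ Real.exp (30 * y) := by
    have e6 : Real.exp 1 ^ 6 = Real.exp 6 := by rw [← Real.exp_nat_mul]; norm_num
    have h3 : (2.7 : ℝ) ^ 6 ≤ Real.exp 1 ^ 6 := pow_le_pow_left₀ (by norm_num) he 6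
    norm_num at h3
    have h4 : (256 : ℝ) ≤ Real.exp 6 := by linarith
    calc (256 : ℝ) ^ d ≤ Real.exp 6 ^ d := pow_le_pow_left₀ (by norm_num) h4 d
      _ = Real.exp (d * 6) := by rw [← Real.exp_nat_mul]
      _ ≤ _ := Real.exp_le_exp.mpr (by linarith)
  have hy4 : (8 * y) ^ 4 ≤ Real.exp (32 * y) := by
    have : 8 * y ≤ Real.exp (8 * y) := by linarith [Real.add_one_le_exp (8 * y)]
    calc (8 * y) ^ 4 ≤ Real.exp (8 * y) ^ 4 := pow_le_pow_left₀ (by linarith) this 4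
      _ = Real.exp (32 * y) := by
        rw [← Real.exp_nat_mul]
        congr 1
        push_cast
        ring
  rw [hη, hδ, div_pow, one_pow, le_div_iff₀ (by positivity)]
  calc 256 ^ d * 8 * Real.exp (-(65 * y)) * (8 * y) ^ 4
      ≤ Real.exp (30 * y) * Real.exp (3 * y) * Real.exp (-(65 * y)) * Real.exp (32 * y) := by
        gcongr
    _ = 1 := by
        rw [← Real.exp_add, ← Real.exp_add, ← Real.exp_add, ← Real.exp_zero]
        congr 1
        ring

/-- sharp form of Bourgain's theorem (Theorem 1.4). -/
theorem statement13 :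
    ∀ ε : ℝ, 0 < ε → ε < 1/2 →
      ∃ C : ℝ, 1 ≤ C ∧
        ∀ (n : ℕ) (p K : ℝ) (f : (Fin n → Bool) → ℝ),
          0 < p → p ≤ 1/2 → 1 ≤ K → (∀ x, f x = 0 ∨ f x = 1) → Mono f →
          ε ≤ Ep p f → Ep p f ≤ 1 - ε → totalInf p f ≤ K / p →
          ∃ J : Finset (Fin n), (J.card : ℝ) ≤ C * K ∧
            Ep p f + Real.exp (-(C * K)) ≤ Ep p (restrict1 J f) := by
  intro ε hε hε2
  refine ⟨65 / ε, ?_, ?_⟩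
  · rw [le_div_iff₀ hε]
    linarith
  intro n p K f hp hp2 hK hb hf h1 h2 hI
  by_contra hcon
  push Not at hcon
  set y := K / ε with hy
  have hCK : 65 / ε * K = 65 * y := by rw [hy]; ring
  rw [hCK] at hcon
  have hyK : y * ε = K := by rw [hy]; field_simp
  have hy2 : 2 ≤ y := by
    rw [hy, le_div_iff₀ hε]
    linarith
  have hd1 : 4 * y ≤ ⌈4 * y⌉₊ := Nat.le_ceil _
  have hd2 : (⌈4 * y⌉₊ : ℝ) < 4 * y + 1 := Nat.ceil_lt_add_one (by linarith)
  set d := ⌈4 * y⌉₊ with hd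
  have hnum := numeric (δ := Real.exp (-(65 * y))) (η := 1 / (8 * y)) hy2 d (by linarith) rfl rfl
  have hη : 0 ≤ 1 / (8 * y) := by positivity
  have hc := core hp hp2 (Real.exp_pos _).le hη d hnum hε hε2 hf hb h1 h2 (by linarith) hI
    (fun S hS => (hcon S (by
      have : (S.card : ℝ) ≤ d + 1 := by exact_mod_cast hS
      linarith)).le)
  have e1 : 1 / (8 * y) * K = ε / 8 := by
    rw [← hyK]
    field_simp
  have e2 : K / ((d : ℝ) + 2) ≤ ε / 4 := by
    rw [div_le_iff₀ (by positivity), ← hyK]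
    nlinarith
  linarith

end GlobalHC
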